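/- Let Ω be an infinite set and s,t injective functions Ω → Ω with |Ω \ s(Ω)| = |Ω \ t(Ω)| = 0, i.e., s,t ∈ S(Ω). Then s ∼_s t in the monoid J(Ω) of injective self-maps; more specifically, every permutation of an infinite set Ω is a commutator in S(Ω), hence s ∼_s^1 t. -/

import Mathlib

/-- `s ∼ₛ¹ t` in the monoid `J(Ω)` of injective self-maps of `Ω`: `s = p₁⋯pₙ` and
`t = p_{f(1)}⋯p_{f(n)}` for injective `p_i` and a permutation `f` (as a list permutation). -/
def JSimS1 {Ω : Type*} (s t : Function.End Ω) : Prop :=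
  ∃ l l' : List (Function.End Ω), (∀ p ∈ l, Function.Injective p) ∧ l.Perm l' ∧
    s = l.prod ∧ t = l'.prod

/-!
Two permutations of `Ω` all of whose cycles are infinite are conjugate as soon as they have equally
many cycles. So, to write `q` as a commutator, it is enough to find `a` such that both `a` and
`q * a` have `#Ω` cycles, all infinite: if `q * a = b * a * b⁻¹` then `q = ⁅b, a⁆`.

A permutation strictly increasing some height `h : Ω → ℤ` has only infinite cycles, and at least as
many of them as the fibre `h ⁻¹' {0}` has elements. Hence it suffices to find a height that `q`
decreases by at most one and all of whose fibres have cardinality `#Ω`, and then to choose `a`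
raising the height by exactly two. If `q` has infinitely many cycles, it has `#Ω` of them, and a
`q`-invariant height works. Otherwise `Ω` is countable and `q` has an infinite cycle, along which
the height can follow a sawtooth that descends in unit steps and jumps back up.

Injective maps `s`, `t` whose ranges have equinumerous complements satisfy `s = ⁅a, b⁆ ∘ t` for some
permutations `a`, `b`, and swapping the first two factors of `a * b * a⁻¹ * b⁻¹ * t` gives `t`.
-/

open Cardinal Equiv Function
open scoped commutatorElement

universe u

section Cycles

variable {α : Type u} {β : Type*}

/-- The set of cycles of a permutation, each fixed point counting as a cycle. -/
abbrev CycleSet (f : Perm α) : Type u :=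
  Quotient (Perm.SameCycle.setoid f)

/-- A permutation is aperiodic if all its cycles are infinite, that is, if it generates a free
action of `ℤ`. -/
def IsAperiodic (f : Perm α) : Prop :=
  ∀ x, Injective fun n : ℤ ↦ (f ^ n) x

theorem CycleSet.mk_eq_mk_iff {f : Perm α} {x y : α} :
    (⟦x⟧ : CycleSet f) = ⟦y⟧ ↔ f.SameCycle x y :=
  Quotient.eq

theorem CycleSet.mk_zpow_apply (f : Perm α) (n : ℤ) (x : α) :
    (⟦(f ^ n) x⟧ : CycleSet f) = ⟦x⟧ :=
  mk_eq_mk_iff.2 (Perm.sameCycle_zpow_left.2 (.refl f x))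

theorem CycleSet.surjective_zpow_apply_out (f : Perm α) :
    Surjective fun p : CycleSet f × ℤ ↦ (f ^ p.2) p.1.out := by
  intro x
  obtain ⟨n, hn⟩ := mk_eq_mk_iff.1 (Quotient.out_eq (⟦x⟧ : CycleSet f))
  exact ⟨(⟦x⟧, n), hn⟩

theorem mk_cycleSet_of_infinite (f : Perm α) [Infinite (CycleSet f)] : #(CycleSet f) = #α :=
  (mk_le_of_surjective Quotient.mk_surjective).antisymm <| by
    simpa using mk_le_of_surjective (CycleSet.surjective_zpow_apply_out f)

theorem injective_zpow_apply_of_infinite_cycle {f : Perm α} {x : α}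
    (hx : {y | f.SameCycle x y}.Infinite) : Injective fun n : ℤ ↦ (f ^ n) x := by
  intro m n (hmn : (f ^ m) x = (f ^ n) x)
  by_contra hne
  have hk : m - n ≠ 0 := sub_ne_zero.2 hne
  have hperiod : (f ^ (m - n)) x = x := by
    rw [sub_eq_neg_add, zpow_add, Perm.mul_apply, hmn, ← Perm.mul_apply, ← zpow_add,
      neg_add_cancel, zpow_zero, Perm.one_apply]
  refine hx (((Set.finite_Ico 0 |m - n|).image fun r ↦ (f ^ r) x).subset ?_)
  rintro _ ⟨i, rfl⟩
  refine ⟨i % (m - n), ⟨Int.emod_nonneg i hk, Int.emod_lt_abs i hk⟩, ?_⟩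
  conv_rhs => rw [← Int.emod_add_mul_ediv i (m - n)]
  rw [zpow_add, zpow_mul, Perm.mul_apply, Perm.zpow_apply_eq_self_of_apply_eq_self hperiod]

theorem exists_injective_zpow_apply_of_finite_cycleSet [Infinite α] (f : Perm α)
    [Finite (CycleSet f)] : ∃ x, Injective fun n : ℤ ↦ (f ^ n) x := by
  obtain ⟨c, hc⟩ := Finite.exists_infinite_fiber fun x : α ↦ (⟦x⟧ : CycleSet f)
  obtain ⟨x, rfl⟩ := Quotient.exists_rep c
  exact ⟨x, injective_zpow_apply_of_infinite_cycle <|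
    (Set.infinite_coe_iff.1 hc).mono fun y hy ↦ (CycleSet.mk_eq_mk_iff.1 hy).symm⟩

namespace IsAperiodic

/-- Choosing a base point in each cycle identifies an aperiodic permutation with the shift
`(c, n) ↦ (c, n + 1)` of `CycleSet f × ℤ`. -/
noncomputable def cycleSetProdEquiv {f : Perm α} (hf : IsAperiodic f) : CycleSet f × ℤ ≃ α :=
  Equiv.ofBijective (fun p ↦ (f ^ p.2) p.1.out) <| by
    refine ⟨?_, CycleSet.surjective_zpow_apply_out f⟩
    rintro ⟨c, m⟩ ⟨d, n⟩ (h : (f ^ m) c.out = (f ^ n) d.out)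
    have hcd : c = d := by
      simpa only [CycleSet.mk_zpow_apply, Quotient.out_eq] using congrArg (⟦·⟧ : α → CycleSet f) h
    subst hcd
    rw [hf _ h]

theorem cycleSetProdEquiv_add_one {f : Perm α} (hf : IsAperiodic f) (c : CycleSet f) (n : ℤ) :
    hf.cycleSetProdEquiv (c, n + 1) = f (hf.cycleSetProdEquiv (c, n)) := by
  change (f ^ (n + 1)) c.out = f ((f ^ n) c.out)
  rw [add_comm, zpow_one_add, Perm.mul_apply]

theorem isConj {f g : Perm α} (hf : IsAperiodic f) (hg : IsAperiodic g)
    (h : #(CycleSet f) = #(CycleSet g)) : IsConj f g := by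
  obtain ⟨e⟩ := Cardinal.eq.1 h
  let b : Perm α := hf.cycleSetProdEquiv.symm.trans <|
    (e.prodCongr (Equiv.refl ℤ)).trans hg.cycleSetProdEquiv
  have hb (c n) : b (hf.cycleSetProdEquiv (c, n)) = hg.cycleSetProdEquiv (e c, n) := by simp [b]
  refine isConj_iff.2 ⟨b, mul_inv_eq_iff_eq_mul.2 (Equiv.ext fun x ↦ ?_)⟩
  obtain ⟨⟨c, n⟩, rfl⟩ := hf.cycleSetProdEquiv.surjective x
  rw [Perm.mul_apply, Perm.mul_apply, ← cycleSetProdEquiv_add_one, hb, hb,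
    cycleSetProdEquiv_add_one]

end IsAperiodic

theorem strictMono_zpow_apply [Preorder β] {f : Perm α} {h : α → β} (hf : ∀ x, h x < h (f x))
    (x : α) : StrictMono fun n : ℤ ↦ h ((f ^ n) x) :=
  strictMono_int_of_lt_succ fun n ↦ by
    simpa only [add_comm n, zpow_one_add, Perm.mul_apply] using hf ((f ^ n) x)

theorem isAperiodic_of_lt_apply [Preorder β] {f : Perm α} {h : α → β}
    (hf : ∀ x, h x < h (f x)) : IsAperiodic f :=
  fun x ↦ (strictMono_zpow_apply hf x).injective.of_comp (f := h)

theorem mk_fiber_le_mk_cycleSet [Preorder β] {f : Perm α} {h : α → β}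
    (hf : ∀ x, h x < h (f x)) (b : β) : #{x // h x = b} ≤ #(CycleSet f) := by
  refine mk_le_of_injective (f := fun x : {x // h x = b} ↦ (⟦x.1⟧ : CycleSet f)) ?_
  rintro ⟨x, rfl⟩ ⟨y, hy⟩ hxy
  obtain ⟨n, rfl⟩ := CycleSet.mk_eq_mk_iff.1 hxy
  have hn : n = 0 := (strictMono_zpow_apply hf x).injective (by simpa using hy)
  simp [hn]

theorem isConj_of_lt_apply [Preorder β] {f g : Perm α} {h : α → β} (hf : ∀ x, h x < h (f x))
    (hg : ∀ x, h x < h (g x)) {b : β} (hb : #{x // h x = b} = #α) : IsConj f g := by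
  have hcard {k : Perm α} (hk : ∀ x, h x < h (k x)) : #(CycleSet k) = #α :=
    (mk_le_of_surjective Quotient.mk_surjective).antisymm
      (hb.symm.trans_le (mk_fiber_le_mk_cycleSet hk b))
  exact (isAperiodic_of_lt_apply hf).isConj (isAperiodic_of_lt_apply hg)
    ((hcard hf).trans (hcard hg).symm)

end Cycles

section Height

variable {α : Type u}

theorem exists_perm_semiconj_of_mk_fiber_eq {ι : Type*} (h : α → ι) (σ : Perm ι)
    (hσ : ∀ i, #{x // h x = i} = #{x // h x = σ i}) : ∃ a : Perm α, Semiconj h a σ := by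
  let e i : {x // h x = i} ≃ {x // h x = σ i} := (Cardinal.eq.1 (hσ i)).some
  refine ⟨(sigmaFiberEquiv h).symm.trans ((sigmaCongr σ e).trans (sigmaFiberEquiv h)), ?_⟩
  intro x
  exact (e (h x) ⟨x, rfl⟩).2

theorem exists_invariant_height (q : Perm α) [Infinite (CycleSet q)] :
    ∃ h : α → ℤ, (∀ x, h (q x) = h x) ∧ ∀ n, #{x // h x = n} = #α := by
  obtain ⟨e⟩ : Nonempty (CycleSet q ≃ CycleSet q × ℤ) := Cardinal.eq.1 (by simp)
  refine ⟨fun x ↦ (e ⟦x⟧).2, fun x ↦ ?_, fun n ↦ (mk_subtype_le _).antisymm ?_⟩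
  · exact congrArg (fun c ↦ (e c).2) (CycleSet.mk_zpow_apply q 1 x)
  · rw [← mk_cycleSet_of_infinite q]
    refine mk_le_of_surjective (f := fun x ↦ (e ⟦x.1⟧).1) fun c ↦ ?_
    obtain ⟨x, hx⟩ := Quotient.exists_rep (e.symm (c, n))
    exact ⟨⟨x, by simp [hx]⟩, by simp [hx]⟩

/-- The sawtooth that vanishes on negative integers and descends in unit steps from `k` to `-k` on
each interval `[k ^ 2, k ^ 2 + 2 * k]`. -/
def sawtooth (n : ℤ) : ℤ :=
  n.toNat.sqrt ^ 2 + n.toNat.sqrt - n.toNat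

theorem sawtooth_le_sawtooth_succ_add_one (n : ℤ) : sawtooth n ≤ sawtooth (n + 1) + 1 := by
  have hsqrt : (n.toNat.sqrt : ℤ) ≤ (n + 1).toNat.sqrt := by
    exact_mod_cast Nat.sqrt_le_sqrt (by omega)
  have htoNat : ((n + 1).toNat : ℤ) ≤ n.toNat + 1 := by omega
  unfold sawtooth
  nlinarith

theorem sawtooth_sq_add_sub {j : ℤ} {m : ℕ} (hj : j.natAbs ≤ m) :
    sawtooth (m ^ 2 + m - j) = j := by
  have htoNat : (m ^ 2 + m - j : ℤ).toNat = m ^ 2 + (m - j).toNat := by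
    have := sq_nonneg (m : ℤ)
    zify
    omega
  have hsqrt : (m ^ 2 + m - j : ℤ).toNat.sqrt = m := by
    rw [htoNat, Nat.sqrt_add_eq' m (by omega)]
  rw [sawtooth, hsqrt, htoNat, Nat.cast_add, Int.toNat_of_nonneg (by omega)]
  push_cast
  ring

theorem infinite_setOf_sawtooth_eq (j : ℤ) : {n | sawtooth n = j}.Infinite := by
  refine Set.infinite_of_forall_exists_gt fun n ↦ ?_
  let m : ℕ := j.natAbs + n.natAbs + 1
  have hn : n < m - j := by omega
  exact ⟨m ^ 2 + m - j, sawtooth_sq_add_sub (by omega), by linarith [sq_nonneg (m : ℤ)]⟩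

theorem exists_height_of_injective_zpow_apply {q : Perm α} {x : α}
    (hx : Injective fun n : ℤ ↦ (q ^ n) x) :
    ∃ h : α → ℤ, (∀ y, h y ≤ h (q y) + 1) ∧ ∀ n, {y | h y = n}.Infinite := by
  let h : α → ℤ := extend (fun n : ℤ ↦ (q ^ n) x) sawtooth 0
  have h_zpow (n : ℤ) : h ((q ^ n) x) = sawtooth n := hx.extend_apply sawtooth 0 n
  have h_off {y : α} (hy : ¬ q.SameCycle x y) : h y = 0 := extend_apply' _ _ _ hy
  refine ⟨h, fun y ↦ ?_, fun n ↦ ?_⟩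
  · by_cases hy : q.SameCycle x y
    · obtain ⟨n, rfl⟩ := hy
      rw [← Perm.mul_apply, ← zpow_one_add, h_zpow, h_zpow, add_comm 1 n]
      exact sawtooth_le_sawtooth_succ_add_one n
    · rw [h_off hy, h_off (mt Perm.sameCycle_apply_right.1 hy)]
      norm_num
  · refine ((infinite_setOf_sawtooth_eq n).image hx.injOn).mono ?_
    rintro _ ⟨m, hm, rfl⟩
    exact (h_zpow m).trans hm

theorem exists_height_le_apply_add_one [Infinite α] (q : Perm α) :
    ∃ h : α → ℤ, (∀ x, h x ≤ h (q x) + 1) ∧ ∀ n, #{x // h x = n} = #α := by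
  rcases finite_or_infinite (CycleSet q) with _ | _
  · obtain ⟨x, hx⟩ := exists_injective_zpow_apply_of_finite_cycleSet q
    obtain ⟨h, hq, hfib⟩ := exists_height_of_injective_zpow_apply hx
    have : Countable α := (CycleSet.surjective_zpow_apply_out q).countable
    refine ⟨h, hq, fun n ↦ ?_⟩
    have : Infinite {x // h x = n} := (hfib n).to_subtype
    rw [mk_eq_aleph0, mk_eq_aleph0]
  · obtain ⟨h, hq, hfib⟩ := exists_invariant_height q
    exact ⟨h, fun x ↦ by rw [hq]; exact (lt_add_one _).le, hfib⟩

end Height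

theorem exists_eq_commutatorElement {α : Type*} [Infinite α] (q : Perm α) :
    ∃ a b : Perm α, q = ⁅a, b⁆ := by
  obtain ⟨h, hq, hfib⟩ := exists_height_le_apply_add_one q
  obtain ⟨a, ha⟩ := exists_perm_semiconj_of_mk_fiber_eq h (Equiv.addRight 2)
    fun n ↦ (hfib n).trans (hfib _).symm
  have ha' (x : α) : h (a x) = h x + 2 := ha x
  have hconj : IsConj a (q * a) := isConj_of_lt_apply
    (fun x ↦ by linarith [ha' x])
    (fun x ↦ by rw [Perm.mul_apply]; linarith [ha' x, hq (a x)]) (hfib 0)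
  obtain ⟨b, hb⟩ := isConj_iff.1 hconj
  exact ⟨b, a, by rw [commutatorElement_def, hb, mul_inv_cancel_right]⟩

theorem exists_perm_comp_eq_of_mk_compl_range_eq {α β : Type*} {s t : β → α} (hs : Injective s)
    (ht : Injective t) (hst : #↥(Set.range s)ᶜ = #↥(Set.range t)ᶜ) :
    ∃ q : Perm α, s = q ∘ t := by
  classical
  obtain ⟨e⟩ := Cardinal.eq.1 hst
  refine ⟨subtypeCongr ((ofInjective t ht).symm.trans (ofInjective s hs)) e.symm, ?_⟩
  ext x
  simp [subtypeCongr]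

theorem jSimS1_commutatorElement_comp {α : Type*} (a b : Perm α) {t : Function.End α}
    (ht : Injective t) : JSimS1 (⇑⁅a, b⁆ ∘ t) t := by
  refine ⟨[⇑a, ⇑b, ⇑a⁻¹, ⇑b⁻¹, t], [⇑b, ⇑a, ⇑a⁻¹, ⇑b⁻¹, t], ?_, .swap _ _ _, rfl, funext fun x ↦ ?_⟩
  · exact List.forall_iff_forall_mem.1
      ⟨a.injective, b.injective, a⁻¹.injective, b⁻¹.injective, ht⟩
  · have hcancel : b * a * a⁻¹ * b⁻¹ = 1 := by group
    exact (DFunLike.congr_fun hcancel (t x)).symm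

theorem bijections_simS1_general {Ω : Type*} [Infinite Ω] (s t : Function.End Ω)
    (hs : Injective s) (ht : Injective t) (hst : #↥(Set.range s)ᶜ = #↥(Set.range t)ᶜ) :
    (∀ q : Perm Ω, ∃ a b : Perm Ω, q = a * b * a⁻¹ * b⁻¹) ∧ JSimS1 s t := by
  refine ⟨exists_eq_commutatorElement, ?_⟩
  obtain ⟨q, rfl⟩ := exists_perm_comp_eq_of_mk_compl_range_eq hs ht hst
  obtain ⟨a, b, rfl⟩ := exists_eq_commutatorElement q
  exact jSimS1_commutatorElement_comp a b ht

/-- For infinite `Ω`, every permutation of `Ω` is a commutator in `S(Ω)`; consequently any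
two bijective self-maps `s, t` satisfy `s ∼ₛ¹ t` in `J(Ω)`. -/
theorem bijections_simS1 {Ω : Type*} [Infinite Ω] (s t : Function.End Ω)
    (hs : Function.Bijective s) (ht : Function.Bijective t) :
    (∀ q : Equiv.Perm Ω, ∃ a b : Equiv.Perm Ω, q = a * b * a⁻¹ * b⁻¹) ∧ JSimS1 s t := by
  exact bijections_simS1_general s t hs.injective ht.injective
    (by rw [hs.surjective.range_eq, ht.surjective.range_eq])
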